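/- arXiv:0802.2554 — 3 statements merged into one kernel-verified Lean document; each statement's English description precedes it below -/
import Mathlib

section
/- Let G ≤ Aut(X^*) be a contracting self-similar group with nucleus 𝒩. Then for every w ∈ X^ω the group of G-germs G_(w) is finite of cardinality at most |𝒩|. -/
/-! The rooted tree `X^*` of finite words over a fixed alphabet `X`, realized via its
boundary `X^ω = ℕ → X`; automorphisms, restrictions, self-similar and contracting groups. -/

/-- A permutation of the boundary `X^ω = ℕ → X` is (induced by) an automorphism of the
rooted tree `X^*` iff for all `n` it preserves the relation "agree on the first `n`
letters" (two sequences have the same length-`n` beginning iff their images do). -/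
def IsTreeAut {X : Type*} (f : Equiv.Perm (ℕ → X)) : Prop :=
  ∀ (n : ℕ) (w w' : ℕ → X),
    (∀ i, i < n → w i = w' i) ↔ (∀ i, i < n → f w i = f w' i)

/-- The automorphism group `Aut X^*` of the rooted tree `X^*`, realized as the group of
those permutations of the boundary `X^ω` induced by tree automorphisms. -/
def treeAut (X : Type*) : Subgroup (Equiv.Perm (ℕ → X)) where
  carrier := {f | IsTreeAut f}
  one_mem' := by intro n w w'; simp
  mul_mem' := by
    intro f g hf hg n w w'
    have h := (hg n w w').trans (hf n (g w) (g w'))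
    simpa using h
  inv_mem' := by
    intro f hf n w w'
    have h := (hf n (f⁻¹ w) (f⁻¹ w')).symm
    simpa using h

/-- The concatenation `v·u ∈ X^ω` of a finite word `v ∈ X^m` and a sequence `u ∈ X^ω`. -/
def wappend {X : Type*} {m : ℕ} (v : Fin m → X) (u : ℕ → X) : ℕ → X :=
  fun i => if h : i < m then v ⟨i, h⟩ else u (i - m)

/-- The underlying function of the restriction `f|_v`: it sends `u` to the sequence with
`v·u ↦ (f v)·(f|_v u)`, i.e. `(f|_v u) j` is letter `m + j` of `f (v·u)`. -/
def restrictFun {X : Type*} (f : Equiv.Perm (ℕ → X)) {m : ℕ} (v : Fin m → X) :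
    (ℕ → X) → (ℕ → X) :=
  fun u j => f (wappend v u) (m + j)

open scoped Classical in
/-- The restriction (section, state) `f|_v` of `f` at the vertex `v ∈ X^*`: the unique
automorphism of `X^*` with `f (v·u) = (f v)·(f|_v u)` for all `u`.  (For `f` a tree
automorphism the underlying function `restrictFun f v` is bijective, and `f|_v` is the
corresponding permutation of the boundary.) -/
noncomputable def restrictPerm {X : Type*} (f : Equiv.Perm (ℕ → X)) {m : ℕ}
    (v : Fin m → X) : Equiv.Perm (ℕ → X) :=
  if h : Function.Bijective (restrictFun f v) then Equiv.ofBijective _ h else 1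

/-- A group `G` of permutations of the boundary is self-similar if it is closed under
taking restrictions. -/
def SelfSimilar {X : Type*} (G : Subgroup (Equiv.Perm (ℕ → X))) : Prop :=
  ∀ g ∈ G, ∀ (m : ℕ) (v : Fin m → X), restrictPerm g v ∈ G

/-- The (self-similar) group `G` is contracting with the finite set `N ⊆ G`: for every
`g ∈ G` there is `n` such that `g|_v ∈ N` for all words `v` of length greater than `n`. -/
def IsContractingWith {X : Type*} (G : Subgroup (Equiv.Perm (ℕ → X)))
    (N : Finset (Equiv.Perm (ℕ → X))) : Prop :=
  (N : Set (Equiv.Perm (ℕ → X))) ⊆ (G : Set (Equiv.Perm (ℕ → X))) ∧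
    ∀ g ∈ G, ∃ n : ℕ, ∀ (m : ℕ) (v : Fin m → X), n < m → restrictPerm g v ∈ N

theorem wappend_of_lt {X : Type*} {m : ℕ} (v : Fin m → X) (u : ℕ → X) {i : ℕ} (hi : i < m) :
    wappend v u i = v ⟨i, hi⟩ := by
  simp [wappend, hi]

theorem wappend_add {X : Type*} {m : ℕ} (v : Fin m → X) (u : ℕ → X) (j : ℕ) :
    wappend v u (m + j) = u j := by
  simp [wappend]

/-- A sequence beginning with `v` is `v` followed by its shift. -/
theorem wappend_shift {X : Type*} {m : ℕ} (v : Fin m → X) (p : ℕ → X)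
    (hp : ∀ i (hi : i < m), p i = v ⟨i, hi⟩) : wappend v (fun j => p (m + j)) = p := by
  funext i
  rcases lt_or_ge i m with hi | hi
  · rw [wappend_of_lt _ _ hi, hp i hi]
  · obtain ⟨j, rfl⟩ := Nat.exists_eq_add_of_le hi
    rw [wappend_add]

theorem IsTreeAut.restrictFun_bijective {X : Type*} [Nonempty X] {f : Equiv.Perm (ℕ → X)}
    (hf : IsTreeAut f) {m : ℕ} (v : Fin m → X) : Function.Bijective (restrictFun f v) := by
  constructor
  · intro u u' h
    have hfe : f (wappend v u) = f (wappend v u') := by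
      funext i
      rcases lt_or_ge i m with hi | hi
      · refine (hf m (wappend v u) (wappend v u')).1 (fun k hk => ?_) i hi
        rw [wappend_of_lt _ _ hk, wappend_of_lt _ _ hk]
      · obtain ⟨j, rfl⟩ := Nat.exists_eq_add_of_le hi
        exact congrFun h j
    funext j
    rw [← wappend_add v u j, f.injective hfe, wappend_add]
  · intro y
    obtain ⟨x⟩ := ‹Nonempty X›
    let q : ℕ → X := wappend v fun _ => x
    let z : ℕ → X := wappend (fun i : Fin m => f q i) y
    have hp : ∀ i (hi : i < m), f.symm z i = v ⟨i, hi⟩ := by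
      intro i hi
      rw [← wappend_of_lt v (fun _ => x) hi]
      refine (hf m (f.symm z) q).2 (fun k hk => ?_) i hi
      rw [Equiv.apply_symm_apply]
      exact wappend_of_lt _ _ hk
    refine ⟨fun j => f.symm z (m + j), ?_⟩
    funext j
    rw [restrictFun, wappend_shift v _ hp, Equiv.apply_symm_apply]
    exact wappend_add _ _ _

theorem IsTreeAut.restrictPerm_apply {X : Type*} [Nonempty X] {f : Equiv.Perm (ℕ → X)}
    (hf : IsTreeAut f) {m : ℕ} (v : Fin m → X) (u : ℕ → X) (j : ℕ) :
    restrictPerm f v u j = f (wappend v u) (m + j) := by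
  rw [restrictPerm, dif_pos (hf.restrictFun_bijective v)]
  rfl

/-- Two tree automorphisms fixing `w` with the same restriction at a beginning of `w`
agree on the corresponding cylinder. -/
theorem IsTreeAut.eq_on_cylinder {X : Type*} [Nonempty X] {g h : Equiv.Perm (ℕ → X)}
    (hg : IsTreeAut g) (hh : IsTreeAut h) {w : ℕ → X} (hgw : g w = w) (hhw : h w = w) {m : ℕ}
    (hr : restrictPerm g (fun i : Fin m => w i) = restrictPerm h (fun i : Fin m => w i))
    {u : ℕ → X} (hu : ∀ i, i < m → u i = w i) : g u = h u := by
  funext i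
  rcases lt_or_ge i m with hi | hi
  · rw [(hg m u w).1 hu i hi, (hh m u w).1 hu i hi, hgw, hhw]
  · obtain ⟨j, rfl⟩ := Nat.exists_eq_add_of_le hi
    have key := congrFun (congrArg (fun e : Equiv.Perm (ℕ → X) => e fun j => u (m + j)) hr) j
    simp only [hg.restrictPerm_apply, hh.restrictPerm_apply] at key
    rwa [wappend_shift _ u hu] at key

/-- **Proposition `pr:finitegerms`.** Let `G ≤ Aut X^*` be a contracting
self-similar group with nucleus `N`. Then for every `w ∈ X^ω` the group of `G`-germs
`G_(w)` is finite of cardinality at most `|N|`: any finite subset of the stabilizer of `w`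
in `G` with more than `|N|` elements contains two distinct elements with the same germ at
`w` (i.e. acting identically on a neighborhood of `w`). -/
theorem stmt_5 (X : Type*) [Fintype X] [Nonempty X]
    (G : Subgroup (Equiv.Perm (ℕ → X))) (hG : G ≤ treeAut X) (hss : SelfSimilar G)
    -- `N` is the nucleus of `G`: the smallest finite set witnessing contraction
    (N : Finset (Equiv.Perm (ℕ → X)))
    (hN : IsContractingWith G N)
    (hmin : ∀ N' : Finset (Equiv.Perm (ℕ → X)), IsContractingWith G N' → N ⊆ N')
    (w : ℕ → X)
    (T : Finset (Equiv.Perm (ℕ → X))) (hT : ∀ g ∈ T, g ∈ G ∧ g w = w)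
    (hcard : N.card < T.card) :
    ∃ g ∈ T, ∃ h ∈ T, g ≠ h ∧
      ∃ m : ℕ, ∀ u : ℕ → X, (∀ i, i < m → u i = w i) → g u = h u := by
  choose! n hn using hN.2
  let m := T.sup n + 1
  obtain ⟨g, hgT, h, hhT, hne, heq⟩ := Finset.exists_ne_map_eq_of_card_lt_of_maps_to hcard
    (f := fun g => restrictPerm g (fun i : Fin m => w i))
    (fun g hg => hn g (hT g hg).1 m _ (Nat.lt_succ_of_le (Finset.le_sup hg)))
  exact ⟨g, hgT, h, hhT, hne, m, fun u hu =>
    IsTreeAut.eq_on_cylinder (hG (hT g hgT).1) (hG (hT h hhT).1) (hT g hgT).2 (hT h hhT).2 heq hu⟩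
end

section
/- Every contracting self-similar group G ≤ Aut(X^*) has no free non-abelian subgroup. -/
/-! Contracting self-similar groups contain no free group of rank two.

If some boundary point has trivial stabilizer in a free subgroup `F`, its orbit grows exponentially,
against the polynomial growth of orbits of contracting groups. Otherwise every boundary point has a
neighbourhood on which a nontrivial element of `F` acts trivially; by compactness and iterated
commutators some nontrivial element of `F` acts trivially everywhere. -/

namespace ContractingGroup

section FreeGroup

variable {α : Type*} [DecidableEq α]

/-- The reduced word of `x` starts with the letter `c` and ends with its inverse. -/
def IsConjugateBy (c : α × Bool) (x : FreeGroup α) : Prop :=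
  c ∈ x.toWord.head? ∧ (c.1, !c.2) ∈ x.toWord.getLast?

theorem isConjugateBy_conj {c : α × Bool} {x : FreeGroup α} (hx : x ≠ 1)
    (hhead : (c.1, !c.2) ∉ x.toWord.head?) (hlast : c ∉ x.toWord.getLast?) :
    IsConjugateBy c (FreeGroup.mk [c] * x * (FreeGroup.mk [c])⁻¹) := by
  have hne : x.toWord ≠ [] := by simpa using hx
  have hmk : FreeGroup.mk [c] * x * (FreeGroup.mk [c])⁻¹
      = FreeGroup.mk ([c] ++ x.toWord ++ [(c.1, !c.2)]) := by
    rw [← FreeGroup.mul_mk, ← FreeGroup.mul_mk, FreeGroup.mk_toWord, FreeGroup.inv_mk]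
    rfl
  have hletter : ∀ p q : Bool, p ≠ !q → q = p := by decide
  have hred : FreeGroup.IsReduced ([c] ++ x.toWord ++ [(c.1, !c.2)]) := by
    refine FreeGroup.IsReduced.append_overlap ?_ ?_ hne
    · refine List.isChain_append.2 ⟨List.isChain_singleton _, FreeGroup.isReduced_toWord, ?_⟩
      rintro a ha ⟨d, e⟩ hd h
      obtain rfl : c = a := by simpa using ha
      refine hletter _ _ fun he => hhead ?_
      have h : c.1 = d := h
      have he : e = !c.2 := he
      rwa [h, ← he]
    · refine List.isChain_append.2 ⟨FreeGroup.isReduced_toWord, List.isChain_singleton _, ?_⟩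
      rintro ⟨d, e⟩ hd a ha h
      obtain rfl : (c.1, !c.2) = a := by simpa using ha
      have h : d = c.1 := h
      refine (hletter _ _ fun he => hlast ?_)
      have he : (!c.2) = !e := he
      have he : e = c.2 := by simpa using he.symm
      rw [h, he] at hd
      exact hd
  unfold IsConjugateBy
  rw [hmk, FreeGroup.toWord_mk, hred.reduce_eq]
  exact ⟨rfl, List.getLast?_concat⟩

theorem IsConjugateBy.ne_one {c : α × Bool} {x : FreeGroup α} (h : IsConjugateBy c x) :
    x ≠ 1 := by
  rintro rfl
  simp [IsConjugateBy] at h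

theorem IsConjugateBy.notMem {c d : α × Bool} {x : FreeGroup α} (h : IsConjugateBy c x)
    (hd : d ≠ (c.1, !c.2)) : (d.1, !d.2) ∉ x.toWord.head? ∧ d ∉ x.toWord.getLast? := by
  refine ⟨fun h' => hd ?_, fun h' => hd (Option.mem_unique h' h.2)⟩
  rw [Option.mem_unique h.1 h']
  simp

theorem isConjugateBy_conj_pow {c : α × Bool} {x : FreeGroup α} (hx : x ≠ 1)
    (hhead : (c.1, !c.2) ∉ x.toWord.head?) (hlast : c ∉ x.toWord.getLast?) (n : ℕ) :
    IsConjugateBy c (FreeGroup.mk [c] ^ (n + 1) * x * (FreeGroup.mk [c] ^ (n + 1))⁻¹) := by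
  induction n with
  | zero => simpa using isConjugateBy_conj hx hhead hlast
  | succ n ih =>
    have hc := ih.notMem (d := c) (fun h => by simpa using congrArg Prod.snd h)
    have h := isConjugateBy_conj ih.ne_one hc.1 hc.2
    rw [pow_succ' _ (n + 1)]
    simpa only [mul_inv_rev, mul_assoc] using h

theorem IsConjugateBy.conj_pow {c d : α × Bool} {x : FreeGroup α} (h : IsConjugateBy c x)
    (hd : d ≠ (c.1, !c.2)) (n : ℕ) :
    IsConjugateBy d (FreeGroup.mk [d] ^ (n + 1) * x * (FreeGroup.mk [d] ^ (n + 1))⁻¹) :=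
  isConjugateBy_conj_pow h.ne_one (h.notMem hd).1 (h.notMem hd).2 n

theorem exists_letter_avoiding {i j : α} (hij : i ≠ j) (p q : Option (α × Bool)) :
    ∃ c : α × Bool, (c.1, !c.2) ∉ p ∧ c ∉ q := by
  by_contra! h
  have h1 := h (i, true)
  have h2 := h (i, false)
  have h3 := h (j, true)
  have h4 := h (j, false)
  clear h
  have hij' := hij.symm
  rcases p with _ | ⟨a, _ | _⟩
  · cases q <;> simp_all
  all_goals
    rcases q with _ | ⟨b, _ | _⟩ <;> by_cases hi : a = i <;> by_cases hj : a = j <;> simp_all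

theorem exists_conj_isConjugateBy {H : Subgroup (FreeGroup α)}
    (hH : ∀ g, ∃ k, g ^ (k + 1) ∈ H) {i j : α} (hij : i ≠ j) {x : FreeGroup α} (hx : x ≠ 1) :
    ∃ t ∈ H, IsConjugateBy (i, true) (t * x * t⁻¹) := by
  obtain ⟨c, hc, hc'⟩ := exists_letter_avoiding hij x.toWord.head? x.toWord.getLast?
  obtain ⟨k, hk⟩ := hH (FreeGroup.mk [c])
  obtain ⟨l, hl⟩ := hH (FreeGroup.mk [(i, true)])
  obtain ⟨m, hm⟩ := hH (FreeGroup.mk [(j, true)])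
  have h := isConjugateBy_conj_pow hx hc hc' k
  by_cases hci : (i, true) = (c.1, !c.2)
  · have h1 := h.conj_pow (d := (j, true)) (by rw [← hci]; simp [hij.symm]) m
    have h2 := h1.conj_pow (d := (i, true)) (by simp) l
    refine ⟨_, H.mul_mem hl (H.mul_mem hm hk), ?_⟩
    simpa only [mul_inv_rev, mul_assoc] using h2
  · have h2 := h.conj_pow (d := (i, true)) hci l
    refine ⟨_, H.mul_mem hl hk, ?_⟩
    simpa only [mul_inv_rev, mul_assoc] using h2

theorem IsConjugateBy.head_mul {c d : α × Bool} {x y : FreeGroup α} (hx : IsConjugateBy c x)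
    (hy : IsConjugateBy d y) (hcd : c.1 ≠ d.1) : c ∈ (x * y).toWord.head? := by
  rw [FreeGroup.toWord_mul, FreeGroup.IsReduced.reduce_eq]
  · rw [List.head?_append, hx.1]
    rfl
  · refine List.isChain_append.2 ⟨FreeGroup.isReduced_toWord, FreeGroup.isReduced_toWord, ?_⟩
    intro a ha b hb h
    rw [Option.mem_unique ha hx.2, Option.mem_unique hb hy.1] at h
    exact absurd h hcd

theorem IsConjugateBy.mul_ne_mul {c d : α × Bool} {x y : FreeGroup α} (hx : IsConjugateBy c x)
    (hy : IsConjugateBy d y) (hcd : c.1 ≠ d.1) : x * y ≠ y * x := by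
  intro h
  have h1 := hx.head_mul hy hcd
  rw [h] at h1
  exact hcd (congrArg Prod.fst (Option.mem_unique h1 (hy.head_mul hx hcd.symm)))

/-- In a free group, finitely many nontrivial subgroups normalized by a common subgroup `H` that
contains a power of every element intersect nontrivially inside `H`. -/
theorem exists_ne_one_forall_mem {H : Subgroup (FreeGroup α)}
    (hH : ∀ g, ∃ k, g ^ (k + 1) ∈ H) {i j : α} (hij : i ≠ j) {ι : Type*}
    (K : ι → Subgroup (FreeGroup α)) (s : Finset ι)
    (hconj : ∀ a ∈ s, ∀ t ∈ H, ∀ x ∈ K a, t * x * t⁻¹ ∈ K a)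
    (hne : ∀ a ∈ s, ∃ x ∈ K a, x ≠ 1) :
    ∃ x ∈ H, x ≠ 1 ∧ ∀ a ∈ s, x ∈ K a := by
  classical
  induction s using Finset.induction_on with
  | empty =>
    obtain ⟨k, hk⟩ := hH (FreeGroup.of i)
    exact ⟨_, hk, by simp [pow_eq_one_iff], by simp⟩
  | insert a s ha ih =>
    obtain ⟨x, hxH, hx, hxK⟩ := ih (fun b hb => hconj b (Finset.mem_insert_of_mem hb))
      (fun b hb => hne b (Finset.mem_insert_of_mem hb))
    obtain ⟨y, hyK, hy⟩ := hne a (Finset.mem_insert_self a s)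
    obtain ⟨k, hk⟩ := hH y
    have hyk : y ^ (k + 1) ≠ 1 := by simpa [pow_eq_one_iff] using hy
    obtain ⟨t, ht, htx⟩ := exists_conj_isConjugateBy hH hij hx
    obtain ⟨u, hu, huy⟩ := exists_conj_isConjugateBy hH hij.symm hyk
    have hx' : t * x * t⁻¹ ∈ H := H.mul_mem (H.mul_mem ht hxH) (H.inv_mem ht)
    have hy' : u * y ^ (k + 1) * u⁻¹ ∈ H := H.mul_mem (H.mul_mem hu hk) (H.inv_mem hu)
    have hya := hconj a (Finset.mem_insert_self a s) u hu _ ((K a).pow_mem hyK (k + 1))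
    have hxb : ∀ b ∈ s, t * x * t⁻¹ ∈ K b := fun b hb =>
      hconj b (Finset.mem_insert_of_mem hb) t ht _ (hxK b hb)
    have hcomm := htx.mul_ne_mul huy hij
    generalize t * x * t⁻¹ = x' at *
    generalize u * y ^ (k + 1) * u⁻¹ = y' at *
    refine ⟨x' * y' * x'⁻¹ * y'⁻¹, H.mul_mem (H.mul_mem (H.mul_mem hx' hy') (H.inv_mem hx'))
      (H.inv_mem hy'), ?_, ?_⟩
    · intro h
      apply hcomm
      rwa [mul_inv_eq_one, mul_inv_eq_iff_eq_mul] at h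
    · intro b hb
      rcases Finset.mem_insert.1 hb with rfl | hbs
      · exact (K b).mul_mem (hconj b hb _ hx' _ hya) ((K b).inv_mem hya)
      · have h := (K b).mul_mem (hxb b hbs) (hconj b hb _ hy' _ ((K b).inv_mem (hxb b hbs)))
        simpa only [mul_assoc] using h

theorem prod_map_of_injective :
    Function.Injective fun l : List α => (l.map (FreeGroup.of : α → FreeGroup α)).prod := by
  have hword : ∀ l : List α,
      ((l.map (FreeGroup.of : α → FreeGroup α)).prod).toWord = l.map fun a => (a, true) := by
    intro l
    induction l with
    | nil => simp
    | cons a l ih =>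
      rw [List.map_cons, List.prod_cons, FreeGroup.toWord_mul, ih,
        FreeGroup.IsReduced.reduce_eq]
      · simp
      · rw [FreeGroup.toWord_of, FreeGroup.IsReduced, List.singleton_append,
          ← List.map_cons (f := fun a => (a, true)), List.isChain_map]
        exact List.Pairwise.isChain (List.pairwise_of_forall (by simp))
  intro l l' h
  have h' := congrArg FreeGroup.toWord h
  simp only [hword] at h'
  exact List.map_injective_iff.2 (fun a b h => congrArg Prod.fst h) h'

end FreeGroup

section Restriction

variable {X : Type*}

/-- The beginning of length `m` of an infinite word. -/
def wordTake (m : ℕ) (w : ℕ → X) : Fin m → X := fun i => w i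

/-- The infinite word obtained by deleting the first `m` letters. -/
def wordDrop (m : ℕ) (w : ℕ → X) : ℕ → X := fun j => w (m + j)

/-- The restriction of `g` at the beginning of length `m` of `w`. -/
noncomputable def restrictAlong (g : Equiv.Perm (ℕ → X)) (m : ℕ) (w : ℕ → X) :
    Equiv.Perm (ℕ → X) :=
  restrictPerm g (wordTake m w)

theorem wappend_of_lt {m : ℕ} (v : Fin m → X) (u : ℕ → X) {i : ℕ} (hi : i < m) :
    wappend v u i = v ⟨i, hi⟩ := by
  simp [wappend, hi]

theorem wappend_add {m : ℕ} (v : Fin m → X) (u : ℕ → X) (j : ℕ) :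
    wappend v u (m + j) = u j := by
  simp [wappend]

theorem ext_take_drop {m : ℕ} {w w' : ℕ → X} (h : ∀ i < m, w i = w' i)
    (h' : ∀ j, w (m + j) = w' (m + j)) : w = w' := by
  funext i
  rcases lt_or_ge i m with hi | hi
  · exact h i hi
  · obtain ⟨j, rfl⟩ := Nat.exists_eq_add_of_le hi
    exact h' j

theorem wappend_wordTake_wordDrop {m : ℕ} {w u : ℕ → X} (h : ∀ i < m, u i = w i) :
    wappend (wordTake m w) (wordDrop m u) = u :=
  ext_take_drop (m := m) (fun i hi => by rw [wappend_of_lt _ _ hi, h i hi, wordTake])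
    (fun j => by rw [wappend_add, wordDrop])

theorem bijective_restrictFun {g : Equiv.Perm (ℕ → X)} (hg : IsTreeAut g) {m : ℕ}
    (v : Fin m → X) : Function.Bijective (restrictFun g v) := by
  constructor
  · intro u u' h
    have hgu : g (wappend v u) = g (wappend v u') := by
      refine ext_take_drop (m := m) ((hg m _ _).1 fun i hi => ?_) (fun j => congrFun h j)
      rw [wappend_of_lt _ _ hi, wappend_of_lt _ _ hi]
    funext j
    rw [← wappend_add v u j, g.injective hgu, wappend_add]
  · intro y
    obtain ⟨z, hz⟩ := g.surjective (wappend (wordTake m (g (wappend v y))) y)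
    have hzv : ∀ i < m, z i = wappend v y i := (hg m _ _).2 fun i hi => by
      rw [hz, wappend_of_lt _ _ hi, wordTake]
    have hz' : wappend v (wordDrop m z) = z :=
      ext_take_drop (m := m)
        (fun i hi => by rw [wappend_of_lt _ _ hi, hzv i hi, wappend_of_lt _ _ hi])
        (fun j => by rw [wappend_add, wordDrop])
    refine ⟨wordDrop m z, ?_⟩
    funext j
    rw [restrictFun, hz', hz, wappend_add]

theorem restrictAlong_apply {g : Equiv.Perm (ℕ → X)} (hg : IsTreeAut g) (m : ℕ)
    (w u : ℕ → X) (j : ℕ) :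
    restrictAlong g m w u j = g (wappend (wordTake m w) u) (m + j) := by
  rw [restrictAlong, restrictPerm, dif_pos (bijective_restrictFun hg _)]
  rfl

/-- The action of `g` on the words beginning as `w` is determined by its action on the beginning
of `w` and by the restriction of `g` there. -/
theorem eq_of_restrictAlong_eq {g h : Equiv.Perm (ℕ → X)} (hg : IsTreeAut g) (hh : IsTreeAut h)
    {m : ℕ} {w u : ℕ → X} (hu : ∀ i < m, u i = w i) (hw : ∀ i < m, g w i = h w i)
    (hr : restrictAlong g m w = restrictAlong h m w) : g u = h u := by
  refine ext_take_drop (m := m) (fun i hi => ?_) (fun j => ?_)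
  · rw [(hg m u w).1 hu i hi, (hh m u w).1 hu i hi, hw i hi]
  · have h1 := restrictAlong_apply hg m w (wordDrop m u) j
    have h2 := restrictAlong_apply hh m w (wordDrop m u) j
    rw [wappend_wordTake_wordDrop hu] at h1 h2
    rw [← h1, ← h2, hr]

theorem restrictAlong_zero {g : Equiv.Perm (ℕ → X)} (hg : IsTreeAut g) (w : ℕ → X) :
    restrictAlong g 0 w = g := by
  ext u j
  rw [restrictAlong_apply hg, zero_add]
  congr 1

theorem restrictAlong_mul {g h : Equiv.Perm (ℕ → X)} (hg : IsTreeAut g) (hh : IsTreeAut h)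
    (m : ℕ) (w : ℕ → X) :
    restrictAlong (g * h) m w = restrictAlong g m (h w) * restrictAlong h m w := by
  ext u j
  rw [restrictAlong_apply ((treeAut X).mul_mem hg hh), Equiv.Perm.mul_apply,
    Equiv.Perm.mul_apply, restrictAlong_apply hg]
  refine congrFun (congrArg g ?_) _
  refine ext_take_drop (m := m) (fun i hi => ?_) (fun j => ?_)
  · rw [wappend_of_lt _ _ hi]
    exact (hh m _ w).1 (fun i hi => by rw [wappend_of_lt _ _ hi, wordTake]) i hi
  · rw [wappend_add, restrictAlong_apply hh]

theorem restrictAlong_add {g : Equiv.Perm (ℕ → X)} (hg : IsTreeAut g) (m n : ℕ) (w : ℕ → X)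
    (hr : IsTreeAut (restrictAlong g m w)) :
    restrictAlong g (m + n) w = restrictAlong (restrictAlong g m w) n (wordDrop m w) := by
  ext u j
  rw [restrictAlong_apply hg, restrictAlong_apply hr, restrictAlong_apply hg, add_assoc]
  refine congrFun (congrArg g ?_) _
  refine ext_take_drop (m := m) (fun i hi => ?_) (fun j => ?_)
  · rw [wappend_of_lt _ _ (by lia), wappend_of_lt _ _ hi, wordTake, wordTake]
  · rw [wappend_add]
    rcases lt_or_ge j n with hj | hj
    · rw [wappend_of_lt _ _ (by lia), wappend_of_lt _ _ hj, wordTake, wordTake, wordDrop]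
    · obtain ⟨l, rfl⟩ := Nat.exists_eq_add_of_le hj
      rw [← add_assoc, wappend_add, wappend_add]

/-- Some positive power of a tree automorphism fixes a given level of the tree. -/
theorem exists_pow_fixing_level [Finite X] {g : Equiv.Perm (ℕ → X)}
    (hg : IsTreeAut g) (n : ℕ) : ∃ k, ∀ u, ∀ i < n, (g ^ (k + 1)) u i = u i := by
  rcases isEmpty_or_nonempty X with hX | ⟨⟨x⟩⟩
  · exact ⟨0, fun u => (hX.false (u 0)).elim⟩
  obtain ⟨a, b, hab, heq⟩ := Finite.exists_ne_map_eq_of_infinite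
    (fun k : ℕ => fun v : Fin n → X => wordTake n ((g ^ k) (wappend v fun _ => x)))
  wlog hlt : a < b generalizing a b
  · exact this b a hab.symm heq.symm (by lia)
  obtain ⟨k, rfl⟩ := Nat.exists_eq_add_of_lt hlt
  have hpow : ∀ k, IsTreeAut (g ^ k) := fun k => (treeAut X).pow_mem hg k
  refine ⟨k, fun u => (hpow a n _ _).2 fun i hi => ?_⟩
  have hu : ∀ i < n, u i = wappend (wordTake n u) (fun _ => x) i := fun i hi => by
    rw [wappend_of_lt _ _ hi, wordTake]
  have h : (g ^ a) (wappend (wordTake n u) fun _ => x) i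
      = (g ^ (a + k + 1)) (wappend (wordTake n u) fun _ => x) i :=
    congrFun (congrFun heq (wordTake n u)) ⟨i, hi⟩
  rw [← Equiv.Perm.mul_apply, ← pow_add, ← add_assoc, (hpow _ n _ _).1 hu i hi, ← h,
    (hpow a n _ _).1 hu i hi]

end Restriction

section Contracting

variable {X : Type*} {G : Subgroup (Equiv.Perm (ℕ → X))} {N : Finset (Equiv.Perm (ℕ → X))}

/-- A common depth at which all restrictions of finitely many elements lie in the nucleus. -/
theorem exists_depth (hN : IsContractingWith G N) {s : Set (Equiv.Perm (ℕ → X))}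
    (hs : s.Finite) (hsG : s ⊆ G) : ∃ m, ∀ g ∈ s, ∀ w, restrictAlong g m w ∈ N := by
  choose! d hd using hN.2
  obtain ⟨m, hm⟩ := (hs.image d).bddAbove
  exact ⟨m + 1, fun g hg w => hd g (hsG hg) _ _
    (Nat.lt_succ_of_le (hm (Set.mem_image_of_mem d hg)))⟩

/-- If `g` fixes `w`, then some positive power of `g` acts
trivially on a neighbourhood of `w`. -/
theorem exists_pow_trivial_near (hG : G ≤ treeAut X) (hN : IsContractingWith G N)
    {g : Equiv.Perm (ℕ → X)} (hg : g ∈ G) {w : ℕ → X} (hw : g w = w) :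
    ∃ k m, ∀ u, (∀ i < m, u i = w i) → (g ^ (k + 1)) u = u := by
  obtain ⟨m, hm⟩ := exists_depth hN (s := (fun k => g ^ k) '' Set.Iic N.card)
    ((Set.finite_Iic _).image _) (by rintro _ ⟨k, -, rfl⟩; exact G.pow_mem hg k)
  obtain ⟨a, ha, b, hb, hab, heq⟩ := Finset.exists_ne_map_eq_of_card_lt_of_maps_to
    (s := Finset.range (N.card + 1)) (t := N) (f := fun k => restrictAlong (g ^ k) m w)
    (by simp) (fun k hk => hm _ ⟨k, by simpa [Nat.lt_succ_iff] using hk, rfl⟩ w)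
  clear ha hb
  wlog hlt : a < b generalizing a b
  · exact this b a hab.symm heq.symm (by lia)
  obtain ⟨k, rfl⟩ := Nat.exists_eq_add_of_lt hlt
  have hpow : ∀ k, IsTreeAut (g ^ k) := fun k => (treeAut X).pow_mem (hG hg) k
  have hfix : ∀ k, (g ^ k) w = w := fun k => Equiv.Perm.pow_apply_eq_self_of_apply_eq_self hw k
  refine ⟨k, m, fun u hu => (g ^ a).injective ?_⟩
  have h := eq_of_restrictAlong_eq (hpow a) (hpow (a + k + 1)) hu
    (fun i _ => by rw [hfix, hfix]) heq
  rw [← Equiv.Perm.mul_apply, ← pow_add, ← add_assoc, h]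

/-- Products of `2 ^ k` elements of `{f i}`, restricted at depth proportional to `k`, lie in a
fixed finite set. -/
theorem exists_finset_restrictAlong_prod_mem (hG : G ≤ treeAut X) (hss : SelfSimilar G)
    (hN : IsContractingWith G N) {ι : Type*} [Finite ι] (f : ι → Equiv.Perm (ℕ → X))
    (hf : ∀ i, f i ∈ G) :
    ∃ M : Finset (Equiv.Perm (ℕ → X)), ∃ m : ℕ, ∀ (k : ℕ) (l : List ι), l.length = 2 ^ k →
      ∀ w, restrictAlong (l.map f).prod (k * m) w ∈ M := by
  classical
  have hfin : (Set.range f ∪ N).Finite := (Set.finite_range f).union N.finite_toSet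
  have hMG : Set.range f ∪ N ⊆ G := by
    rintro _ (⟨i, rfl⟩ | h)
    exacts [hf i, hN.1 h]
  obtain ⟨m, hm⟩ := exists_depth hN (hfin.image2 (· * ·) hfin)
    (by rintro _ ⟨g, hg, h, hh, rfl⟩; exact G.mul_mem (hMG hg) (hMG hh))
  have hprod : ∀ l : List ι, (l.map f).prod ∈ G := fun l =>
    G.list_prod_mem (by simpa using fun i _ => hf i)
  refine ⟨hfin.toFinset, m, fun k => ?_⟩
  induction k with
  | zero =>
    intro l hl w
    obtain ⟨i, rfl⟩ := List.length_eq_one_iff.1 (by simpa using hl)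
    rw [zero_mul, restrictAlong_zero (hG (hprod _))]
    simp
  | succ k ih =>
    intro l hl w
    have hl' : l.length = 2 ^ k + 2 ^ k := by rw [hl, pow_succ]; ring
    have h1 := ih (l.take (2 ^ k)) (by simp [hl']) (((l.drop (2 ^ k)).map f).prod w)
    have h2 := ih (l.drop (2 ^ k)) (by simp [hl']) w
    rw [Set.Finite.mem_toFinset] at h1 h2 ⊢
    rw [add_mul, one_mul, restrictAlong_add (hG (hprod l)) _ _ _
      (hG (hss _ (hprod l) _ _))]
    refine Or.inr (hm _ ?_ _)
    refine ⟨_, h1, _, h2, ?_⟩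
    simp only
    rw [← restrictAlong_mul (hG (hprod _)) (hG (hprod _)), ← List.prod_append,
      ← List.map_append, List.take_append_drop]

theorem exists_mul_pow_lt_two_pow_two_pow (a b m : ℕ) : ∃ k, b ^ (k * m) * a < 2 ^ 2 ^ k := by
  let j := a + 2 * (b * m)
  refine ⟨2 * j, ?_⟩
  have hj : j + 1 ≤ 2 ^ j := Nat.lt_two_pow_self
  have hlin : b * (2 * j * m) + a < 2 ^ (2 * j) := by
    rw [two_mul j, pow_add]
    calc b * ((j + j) * m) + a < (j + 1) * (j + 1) := by
          simp only [j]
          nlinarith [Nat.zero_le (a * a), Nat.zero_le (a * (b * m))]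
      _ ≤ _ := Nat.mul_le_mul hj hj
  calc b ^ (2 * j * m) * a ≤ (2 ^ b) ^ (2 * j * m) * 2 ^ a :=
        Nat.mul_le_mul (Nat.pow_le_pow_left Nat.lt_two_pow_self.le _) Nat.lt_two_pow_self.le
    _ = 2 ^ (b * (2 * j * m) + a) := by rw [← pow_mul, ← pow_add]
    _ < _ := Nat.pow_lt_pow_right one_lt_two hlin

/-- A free group of rank two in a contracting group has no trivial point stabilizer. -/
theorem exists_ne_one_fixing [Finite X] (hG : G ≤ treeAut X) (hss : SelfSimilar G)
    (hN : IsContractingWith G N) (ψ : FreeGroup (Fin 2) →* Equiv.Perm (ℕ → X))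
    (hψ : ∀ g, ψ g ∈ G) (w : ℕ → X) : ∃ g, g ≠ 1 ∧ ψ g w = w := by
  classical
  have := Fintype.ofFinite X
  by_contra! hfree
  obtain ⟨M, m, hM⟩ := exists_finset_restrictAlong_prod_mem hG hss hN
    (fun i => ψ (FreeGroup.of i)) (fun i => hψ _)
  have hM' : ∀ (k : ℕ) (l : List (Fin 2)), l.length = 2 ^ k →
      restrictAlong (ψ (l.map FreeGroup.of).prod) (k * m) w ∈ M := fun k l hl => by
    have h := hM k l hl w
    rwa [map_list_prod, List.map_map]
  obtain ⟨k, hk⟩ := exists_mul_pow_lt_two_pow_two_pow M.card (Fintype.card X) m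
  let F : List.Vector (Fin 2) (2 ^ k) → (Fin (k * m) → X) × M := fun l =>
    (wordTake (k * m) (ψ (l.1.map FreeGroup.of).prod w), ⟨_, hM' k l.1 l.2⟩)
  have hF : Function.Injective F := by
    intro l l' h
    have hpre := congrArg Prod.fst h
    have hres := congrArg (fun p => p.2.1) h
    have hw := eq_of_restrictAlong_eq (hG (hψ _)) (hG (hψ _)) (u := w) (fun _ _ => rfl)
      (fun i hi => congrFun hpre ⟨i, hi⟩) hres
    refine Subtype.ext (prod_map_of_injective ?_)
    by_contra hne
    refine hfree ((l'.1.map FreeGroup.of).prod⁻¹ * (l.1.map FreeGroup.of).prod)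
      (fun h => hne (inv_mul_eq_one.1 h).symm) ?_
    rw [map_mul, map_inv, Equiv.Perm.mul_apply, hw, Equiv.Perm.inv_def, Equiv.symm_apply_apply]
  have hcard := Fintype.card_le_of_injective F hF
  simp only [card_vector, Fintype.card_fin, Fintype.card_prod, Fintype.card_fun,
    Fintype.card_coe] at hcard
  lia

end Contracting

end ContractingGroup

open ContractingGroup in

/-- **Theorem `th:contracting`.** Contracting self-similar groups
`G ≤ Aut X^*` have no free non-abelian subgroups: there is no injective homomorphism from
the free group of rank 2 into `G`. -/
theorem stmt_6 (X : Type*) [Fintype X] [Nonempty X]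
    (G : Subgroup (Equiv.Perm (ℕ → X))) (hG : G ≤ treeAut X) (hss : SelfSimilar G)
    (hc : ∃ N : Finset (Equiv.Perm (ℕ → X)), IsContractingWith G N)
    (φ : FreeGroup (Fin 2) →* G) :
    ¬ Function.Injective φ := by
  intro hφ
  obtain ⟨N, hN⟩ := hc
  let ψ : FreeGroup (Fin 2) →* Equiv.Perm (ℕ → X) := G.subtype.comp φ
  have hψ : ∀ g, ψ g ∈ G := fun g => (φ g).2
  have hψinj : Function.Injective ψ := Subtype.val_injective.comp hφ
  have hlocal : ∀ w : ℕ → X, ∃ m, ∃ g, g ≠ 1 ∧ ∀ u, (∀ i < m, u i = w i) → ψ g u = u := by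
    intro w
    obtain ⟨g, hg, hgw⟩ := exists_ne_one_fixing hG hss hN ψ hψ w
    obtain ⟨k, m, hkm⟩ := exists_pow_trivial_near hG hN (hψ g) hgw
    exact ⟨m, g ^ (k + 1), by simpa [pow_eq_one_iff] using hg, by simpa using hkm⟩
  choose d hd using hlocal
  let : TopologicalSpace X := ⊥
  have : DiscreteTopology X := ⟨rfl⟩
  obtain ⟨s, hs⟩ := isCompact_univ.elim_finite_subcover
    (fun w : ℕ → X => {u | ∀ i < d w, u i = w i})
    (fun w => by
      have h : {u : ℕ → X | ∀ i < d w, u i = w i} = ⋂ i ∈ Set.Iio (d w), {u | u i = w i} := by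
        ext u; simp
      rw [h]
      exact (Set.finite_Iio _).isOpen_biInter fun i _ =>
        (isOpen_discrete ({w i} : Set X)).preimage (continuous_apply (A := fun _ : ℕ => X) i))
    (fun w _ => Set.mem_iUnion.2 ⟨w, fun _ _ => rfl⟩)
  let n := s.sup d
  let H : Subgroup (FreeGroup (Fin 2)) :=
    { carrier := {g | ∀ u, ∀ i < n, ψ g u i = u i}
      one_mem' := by simp
      mul_mem' := by
        intro g h hg hh u i hi
        rw [map_mul, Equiv.Perm.mul_apply, hg _ i hi, hh u i hi]
      inv_mem' := by
        intro g hg u i hi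
        have h := hg ((ψ g)⁻¹ u) i hi
        rw [Equiv.Perm.inv_def, Equiv.apply_symm_apply] at h
        rw [map_inv, Equiv.Perm.inv_def, ← h] }
  let K : (ℕ → X) → Subgroup (FreeGroup (Fin 2)) := fun w =>
    { carrier := {g | ∀ u, (∀ i < d w, u i = w i) → ψ g u = u}
      one_mem' := by simp
      mul_mem' := by
        intro g h hg hh u hu
        rw [map_mul, Equiv.Perm.mul_apply, hh u hu, hg u hu]
      inv_mem' := by
        intro g hg u hu
        rw [map_inv, Equiv.Perm.inv_eq_iff_eq, hg u hu] }
  have hH : ∀ g, ∃ k, g ^ (k + 1) ∈ H := by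
    intro g
    obtain ⟨k, hk⟩ := exists_pow_fixing_level (hG (hψ g)) n
    refine ⟨k, fun u i hi => ?_⟩
    rw [map_pow]
    exact hk u i hi
  obtain ⟨x, -, hx, hxK⟩ := exists_ne_one_forall_mem hH (i := (0 : Fin 2)) (j := 1) (by decide)
    K s
    (by
      intro w hw t ht x hx u hu
      have hu' : ∀ i < d w, (ψ t)⁻¹ u i = w i := fun i hi => by
        rw [← map_inv, H.inv_mem ht u i (hi.trans_le (Finset.le_sup (f := d) hw)), hu i hi]
      rw [map_mul, map_mul, map_inv, Equiv.Perm.mul_apply, Equiv.Perm.mul_apply, hx _ hu',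
        Equiv.Perm.inv_def, Equiv.apply_symm_apply])
    (fun w _ => ⟨_, (hd w).choose_spec.2, (hd w).choose_spec.1⟩)
  refine hx (hψinj ?_)
  rw [map_one]
  refine Equiv.ext fun u => ?_
  obtain ⟨w, hw, hu⟩ := Set.mem_iUnion₂.1 (hs (Set.mem_univ u))
  exact hxK w hw u hu
end

section
/- Let X be a finite set and d ≥ -1. For every g ∈ P_d(X) the set Σ_g of g-singular points of X^ω is at most countable. -/
/-- The restriction `f|_v` is trivial: `f` maps `v·u` to `(f v)·u` for every `u`. -/
def RestrictTrivial {X : Type*} (f : Equiv.Perm (ℕ → X)) {m : ℕ} (v : Fin m → X) : Prop :=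
  ∀ u : ℕ → X, (∀ i : Fin m, u i = v i) → ∀ i, m ≤ i → f u i = u i

/-- The growth function `θ_f(n) = |{v ∈ X^n : f|_v ≠ id}|` of `f`. -/
noncomputable def thetaGrowth {X : Type*} (f : Equiv.Perm (ℕ → X)) (n : ℕ) : ℕ :=
  {v : Fin n → X | ¬ RestrictTrivial f v}.ncard

/-- `f` is finite-state: it has only finitely many restrictions `f|_v`, `v ∈ X^*`. -/
def FiniteState {X : Type*} (f : Equiv.Perm (ℕ → X)) : Prop :=
  {h : Equiv.Perm (ℕ → X) | ∃ (m : ℕ) (v : Fin m → X), restrictPerm f v = h}.Finite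

/-- `f` is finitary: for some `n`, `f|_v = id` for all words `v` of length `n`. -/
def IsFinitary {X : Type*} (f : Equiv.Perm (ℕ → X)) : Prop :=
  ∃ n : ℕ, ∀ u : ℕ → X, ∀ i, n ≤ i → f u i = u i

/-- Membership in Sidki's group `P_d(X)`, for `d ≥ -1`: for `d = -1`, the finitary
automorphisms of `X^*`; for `d ≥ 0`, the finite-state automorphisms of `X^*` whose growth
function `θ` is bounded above by a polynomial of degree `d`. -/
def MemP {X : Type*} (d : ℤ) (f : Equiv.Perm (ℕ → X)) : Prop :=
  IsTreeAut f ∧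
    ((d = -1 ∧ IsFinitary f) ∨
      (0 ≤ d ∧ FiniteState f ∧
        ∃ p : Polynomial ℕ, (p.natDegree : ℤ) ≤ d ∧ ∀ n, thetaGrowth f n ≤ p.eval n))

/-- The set `Σ_f` of `f`-singular points of `X^ω`: points none of whose beginnings `v`
satisfy `f|_v = id`. -/
def singularSet {X : Type*} (f : Equiv.Perm (ℕ → X)) : Set (ℕ → X) :=
  {w | ∀ m : ℕ, ¬ RestrictTrivial f (fun i : Fin m => w i)}

/-- The concatenation of a finite word, given as a list, and an infinite sequence. -/
def listAppend {X : Type*} : List X → (ℕ → X) → (ℕ → X)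
  | [], u => u
  | x :: l, u => fun
    | 0 => x
    | n + 1 => listAppend l u n

/-- The section of a self-map `F` of `X^ω` at a finite word `l`. -/
def listSection {X : Type*} (F : (ℕ → X) → (ℕ → X)) (l : List X) : (ℕ → X) → (ℕ → X) :=
  fun u j => F (listAppend l u) (l.length + j)

/-- The beginning of length `n` of the sequence `w`. -/
def beginning {X : Type*} (w : ℕ → X) (n : ℕ) : List X :=
  List.ofFn fun i : Fin n => w i

theorem listAppend_append {X : Type*} (l l' : List X) (u : ℕ → X) :
    listAppend (l ++ l') u = listAppend l (listAppend l' u) := by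
  induction l with
  | nil => rfl
  | cons x l ih => simp [listAppend, ih]

theorem listSection_append {X : Type*} (F : (ℕ → X) → (ℕ → X)) (l l' : List X) :
    listSection F (l ++ l') = listSection (listSection F l) l' := by
  funext u j
  simp [listSection, listAppend_append, add_assoc]

theorem listAppend_apply {X : Type*} (l : List X) (u : ℕ → X) (i : ℕ) :
    listAppend l u i = if h : i < l.length then l[i] else u (i - l.length) := by
  induction l generalizing i with
  | nil => simp [listAppend]
  | cons x l ih =>
    cases i with
    | zero => simp [listAppend]
    | succ i => simp [listAppend, ih]

theorem wappend_eq_listAppend {X : Type*} {m : ℕ} (v : Fin m → X) (u : ℕ → X) :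
    wappend v u = listAppend (List.ofFn v) u := by
  funext i
  simp [wappend, listAppend_apply]

theorem restrictFun_eq_listSection {X : Type*} (f : Equiv.Perm (ℕ → X)) {m : ℕ}
    (v : Fin m → X) : restrictFun f v = listSection f (List.ofFn v) := by
  funext u j
  simp [restrictFun, listSection, wappend_eq_listAppend]

theorem wappend_of_agree {X : Type*} {m : ℕ} (v : Fin m → X) (u : ℕ → X)
    (h : ∀ i : Fin m, u i = v i) : wappend v (fun j => u (m + j)) = u := by
  funext i
  by_cases hi : i < m
  · simp [wappend, hi, h ⟨i, hi⟩ |>.symm]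
  · simp [wappend, hi, Nat.add_sub_cancel' (not_lt.mp hi)]

theorem restrictTrivial_iff {X : Type*} (f : Equiv.Perm (ℕ → X)) {m : ℕ} (v : Fin m → X) :
    RestrictTrivial f v ↔ restrictFun f v = id := by
  constructor
  · intro h
    funext u j
    rw [restrictFun, h (wappend v u) (fun i => by simp [wappend]) _ (Nat.le_add_right m j),
      wappend_add, id]
  · intro h u hu i hi
    obtain ⟨j, rfl⟩ := Nat.exists_eq_add_of_le hi
    have := congrFun (congrFun h fun j => u (m + j)) j
    rwa [restrictFun, wappend_of_agree v u hu] at this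

theorem FiniteState.finite_range_listSection {X : Type*} [Nonempty X]
    {f : Equiv.Perm (ℕ → X)} (hfs : FiniteState f) (hf : IsTreeAut f) :
    (Set.range fun l : List X => listSection f l).Finite := by
  refine (Set.Finite.image (fun h : Equiv.Perm (ℕ → X) => (h : (ℕ → X) → (ℕ → X))) hfs).subset ?_
  rintro _ ⟨l, rfl⟩
  refine ⟨restrictPerm f l.get, ⟨_, _, rfl⟩, ?_⟩
  have h : (restrictPerm f l.get : (ℕ → X) → (ℕ → X)) = restrictFun f l.get := by
    rw [restrictPerm, dif_pos (hf.restrictFun_bijective _), Equiv.coe_ofBijective]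
  simp only [h, restrictFun_eq_listSection, List.ofFn_get]

/-- A polynomial with natural coefficients is eventually smaller than `2 ^ k`. -/
theorem exists_eval_lt_two_pow (q : Polynomial ℕ) : ∃ k : ℕ, q.eval k < 2 ^ k := by
  have key : (fun k : ℕ => ((q.eval k : ℕ) : ℝ)) =o[Filter.atTop] fun k : ℕ => (2 : ℝ) ^ k := by
    induction q using Polynomial.induction_on' with
    | add p q hp hq => simpa using hp.add hq
    | monomial n a =>
      simpa using
        (isLittleO_pow_const_const_pow_of_one_lt (R := ℝ) n one_lt_two).const_mul_left (a : ℝ)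
  obtain ⟨k, hk⟩ := (key.bound (c := 1 / 2) (by norm_num)).exists
  refine ⟨k, ?_⟩
  have hpos : (0 : ℝ) < 2 ^ k := by positivity
  simp only [Real.norm_natCast, norm_pow, Real.norm_ofNat] at hk
  have : ((q.eval k : ℕ) : ℝ) < 2 ^ k := by linarith
  exact_mod_cast this

/-- Two distinct loops of equal length at a section generate exponentially many words
leading to that section. -/
theorem exists_finset_of_two_loops {X : Type*} (F : (ℕ → X) → (ℕ → X)) (l p q : List X)
    (hne : p ≠ q) (hlen : p.length = q.length)
    (hp : listSection (listSection F l) p = listSection F l)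
    (hq : listSection (listSection F l) q = listSection F l) (k : ℕ) :
    ∃ T : Finset (List X), T.card = 2 ^ k ∧
      ∀ t ∈ T, t.length = l.length + k * p.length ∧ listSection F t = listSection F l := by
  classical
  induction k with
  | zero => exact ⟨{l}, by simp⟩
  | succ k ih =>
    obtain ⟨T, hcard, hT⟩ := ih
    refine ⟨T.image (· ++ p) ∪ T.image (· ++ q), ?_, ?_⟩
    · rw [Finset.card_union_of_disjoint,
        Finset.card_image_of_injective _ (List.append_left_injective p),
        Finset.card_image_of_injective _ (List.append_left_injective q), hcard, pow_succ]
      · ring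
      · rw [Finset.disjoint_left]
        intro t ht ht'
        obtain ⟨a, -, rfl⟩ := Finset.mem_image.mp ht
        obtain ⟨b, -, hb⟩ := Finset.mem_image.mp ht'
        exact hne (List.append_inj' hb hlen.symm).2.symm
    · intro t ht
      rcases Finset.mem_union.mp ht with h | h <;>
        obtain ⟨a, ha, rfl⟩ := Finset.mem_image.mp h
      · simp [listSection_append, (hT a ha).1, (hT a ha).2, hp, add_mul, add_assoc]
      · simp [listSection_append, (hT a ha).1, (hT a ha).2, hq, add_mul, add_assoc, hlen]

theorem card_le_thetaGrowth {X : Type*} [Finite X] (f : Equiv.Perm (ℕ → X)) (n : ℕ)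
    (T : Finset (List X)) (hT : ∀ t ∈ T, t.length = n ∧ listSection f t ≠ id) :
    T.card ≤ thetaGrowth f n := by
  rw [← Set.ncard_coe_finset, thetaGrowth]
  refine le_trans (Set.ncard_le_ncard ?_ (Set.toFinite _))
    (Set.ncard_image_le (f := fun v : Fin n → X => List.ofFn v) (Set.toFinite _))
  intro t ht
  obtain ⟨rfl, hs⟩ := hT t ht
  refine ⟨t.get, ?_, List.ofFn_get t⟩
  rwa [Set.mem_ofPred_eq, restrictTrivial_iff, restrictFun_eq_listSection, List.ofFn_get]

/-- Under polynomial growth, a nontrivial section has at most one loop of each length. -/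
theorem loop_unique {X : Type*} [Finite X] {f : Equiv.Perm (ℕ → X)} {P : Polynomial ℕ}
    (hP : ∀ n, thetaGrowth f n ≤ P.eval n) {l p q : List X} (hl : listSection f l ≠ id)
    (hlen : p.length = q.length)
    (hp : listSection (listSection f l) p = listSection f l)
    (hq : listSection (listSection f l) q = listSection f l) : p = q := by
  by_contra hne
  obtain ⟨k, hk⟩ := exists_eval_lt_two_pow
    (P.comp (Polynomial.C l.length + Polynomial.X * Polynomial.C p.length))
  obtain ⟨T, hcard, hT⟩ := exists_finset_of_two_loops f l p q hne hlen hp hq k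
  have h := (card_le_thetaGrowth f _ T fun t ht => ⟨(hT t ht).1, (hT t ht).2 ▸ hl⟩).trans (hP _)
  rw [hcard] at h
  simp only [Polynomial.eval_comp, Polynomial.eval_add, Polynomial.eval_mul,
    Polynomial.eval_C, Polynomial.eval_X] at hk
  exact absurd hk (not_lt.mpr h)

theorem exists_beginning_eq_append {X : Type*} (w : ℕ → X) {n N : ℕ} (h : n ≤ N) :
    ∃ p, beginning w N = beginning w n ++ p := by
  refine ⟨(beginning w N).drop n, ?_⟩
  conv_lhs => rw [← List.take_append_drop n (beginning w N)]
  congr 1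
  apply List.ext_getElem <;> simp [beginning, h]

theorem getElem?_beginning {X : Type*} (w : ℕ → X) {i n : ℕ} (h : i < n) :
    (beginning w n)[i]? = some (w i) := by
  simp [beginning, h]

/-- Some section along `w` is repeated infinitely often. -/
theorem exists_recurrent_beginning {X : Type*} {F : (ℕ → X) → (ℕ → X)}
    (hF : (Set.range fun l : List X => listSection F l).Finite) (w : ℕ → X) :
    ∃ n, ∀ M, ∃ N > M, listSection F (beginning w N) = listSection F (beginning w n) := by
  by_contra! h
  choose M hM using h
  have hfin : (Set.range fun n => listSection F (beginning w n)).Finite :=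
    hF.subset (Set.range_subset_iff.mpr fun n => ⟨beginning w n, rfl⟩)
  refine Set.infinite_univ (α := ℕ) ((hfin.preimage' fun s hs => ?_).subset fun n _ => ⟨n, rfl⟩)
  obtain ⟨n, rfl⟩ := hs
  exact (Set.finite_Iic (M n)).subset fun N hN => not_lt.mp fun hlt => hM n N hlt hN

theorem countable_singularSet_of_polynomial_growth {X : Type*} [Finite X] [Nonempty X]
    {f : Equiv.Perm (ℕ → X)} (hf : IsTreeAut f) (hfs : FiniteState f) {P : Polynomial ℕ}
    (hP : ∀ n, thetaGrowth f n ≤ P.eval n) : (singularSet f).Countable := by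
  choose n hn using exists_recurrent_beginning (hfs.finite_range_listSection hf)
  refine Set.MapsTo.countable_of_injOn (f := fun w => beginning w (n w))
    (Set.mapsTo_univ _ _) ?_ Set.countable_univ
  intro w hw w' _ heq
  simp only at heq
  by_contra hne
  obtain ⟨i, hi⟩ := Function.ne_iff.mp hne
  obtain ⟨N, hN, hs⟩ := hn w (max i (n w))
  obtain ⟨N', hN', hs'⟩ := hn w' (max i (n w'))
  obtain ⟨p, hp⟩ := exists_beginning_eq_append w (show n w ≤ N by omega)
  obtain ⟨q, hq⟩ := exists_beginning_eq_append w' (show n w' ≤ N' by omega)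
  have hnt : listSection f (beginning w (n w)) ≠ id := by
    have := hw (n w)
    rwa [restrictTrivial_iff, restrictFun_eq_listSection] at this
  rw [hp, listSection_append] at hs
  rw [hq, listSection_append, ← heq] at hs'
  have hcomm : p ++ q = q ++ p :=
    loop_unique hP hnt (by simp [add_comm]) (by simp [listSection_append, hs, hs'])
      (by simp [listSection_append, hs, hs'])
  have h : beginning w N ++ q = beginning w' N' ++ p := by
    rw [hp, hq, ← heq, List.append_assoc, hcomm, List.append_assoc]
  have h' : (beginning w N ++ q)[i]? = (beginning w' N' ++ p)[i]? := by rw [h]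
  rw [List.getElem?_append_left (by simp [beginning]; omega),
    List.getElem?_append_left (by simp [beginning]; omega),
    getElem?_beginning w (by omega), getElem?_beginning w' (by omega)] at h'
  exact hi (Option.some.inj h')

theorem IsFinitary.singularSet_eq_empty {X : Type*} {f : Equiv.Perm (ℕ → X)}
    (hf : IsFinitary f) : singularSet f = ∅ := by
  obtain ⟨n, hn⟩ := hf
  exact Set.eq_empty_of_forall_notMem fun w hw => hw n fun u _ i hi => hn u i hi

/-- Let `X` be a finite set and `d ≥ -1`. For every `g ∈ P_d(X)` the set
`Σ_g` of `g`-singular points of `X^ω` is at most countable. -/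
theorem stmt_12 (X : Type*) [Fintype X] [Nonempty X] (d : ℤ) (hd : -1 ≤ d)
    (g : Equiv.Perm (ℕ → X)) (hg : MemP d g) :
    (singularSet g).Countable := by
  obtain ⟨htree, ⟨-, hfin⟩ | ⟨-, hfs, P, -, hP⟩⟩ := hg
  · simp [hfin.singularSet_eq_empty]
  · exact countable_singularSet_of_polynomial_growth htree hfs hP
end
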